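/- Conservation theorem for the λI-calculus: let M be a λI-term (every abstraction λx.N occurring in M satisfies x ∈ FV(N)). Then M is β-normalizable if and only if M is strongly β-normalizable. -/

import Mathlib

/-! Ordinary λ-terms, in de Bruijn notation. -/
inductive Lam : Type
  | var : ℕ → Lam
  | lam : Lam → Lam
  | app : Lam → Lam → Lam
  deriving DecidableEq

namespace Lam

/-- Shift the free indices `≥ d` up by one. -/
def lift (d : ℕ) : Lam → Lam
  | var n => if n < d then var n else var (n + 1)
  | lam M => lam (lift (d + 1) M)
  | app P Q => app (lift d P) (lift d Q)

/-- Capture-avoiding substitution of `N` for the free variable `k`. -/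
def subst : Lam → ℕ → Lam → Lam
  | var n, k, N => if n = k then N else if k < n then var (n - 1) else var n
  | lam M, k, N => lam (subst M (k + 1) (lift 0 N))
  | app P Q, k, N => app (subst P k N) (subst Q k N)

/-- Number of free occurrences of the variable `k`. -/
def count (k : ℕ) : Lam → ℕ
  | var n => if n = k then 1 else 0
  | lam M => count (k + 1) M
  | app P Q => count k P + count k Q

/-- One-step β-reduction. -/
inductive Beta : Lam → Lam → Prop
  | beta (M N : Lam) : Beta (app (lam M) N) (subst M 0 N)
  | lam {M M'} : Beta M M' → Beta (lam M) (lam M')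
  | appL {P P' Q} : Beta P P' → Beta (app P Q) (app P' Q)
  | appR {P Q Q'} : Beta Q Q' → Beta (app P Q) (app P Q')

/-- The head of the application spine is a variable, with no λ on the spine. -/
def neutral : Lam → Bool
  | var _ => true
  | lam _ => false
  | app P _ => neutral P

/-- Head-normal forms: `λx₁…λxₘ. x N₁ … Nₙ`. -/
def isHNF : Lam → Prop
  | var _ => True
  | lam M => isHNF M
  | app P _ => neutral P = true

/-- The head-reduction function `H`: contracts the head redex, identity on head-normal
forms. -/
def H : Lam → Lam
  | var n => var n
  | lam M => lam (H M)
  | app (lam P) Q => subst P 0 Q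
  | app (var n) Q => app (var n) Q
  | app (app P₁ P₂) Q => app (H (app P₁ P₂)) Q

/-- The left-parallel reduction function `L`: identity on β-normal forms, propagated to
the arguments on head-normal forms, contraction of the head redex otherwise. -/
def L : Lam → Lam
  | var n => var n
  | lam M => lam (L M)
  | app (lam P) Q => subst P 0 Q
  | app (var n) Q => app (var n) (L Q)
  | app (app P₁ P₂) Q =>
      if neutral (app P₁ P₂) then app (L (app P₁ P₂)) (L Q)
      else app (L (app P₁ P₂)) Q

/-- Iterated application `M N₁ … Nₙ`. -/
def mkApps (M : Lam) (Ns : List Lam) : Lam := Ns.foldl app M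

/-- All free variables are `< d`. -/
def ClosedAt (d : ℕ) : Lam → Prop
  | var n => n < d
  | lam M => ClosedAt (d + 1) M
  | app P Q => ClosedAt d P ∧ ClosedAt d Q

/-- `M` is head-normalizable: it β-reduces in finitely many steps to a head-normal form. -/
def HeadNormalizable (M : Lam) : Prop :=
  ∃ N, Relation.ReflTransGen Beta M N ∧ isHNF N

/-- `M` is a β-normal form: it contains no β-redex, i.e. admits no β-step. -/
def BetaNF (M : Lam) : Prop := ¬∃ N, Beta M N

/-- `M` is β-normalizable: it β-reduces in finitely many steps to a β-normal form. -/
def BetaNormalizable (M : Lam) : Prop :=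
  ∃ N, Relation.ReflTransGen Beta M N ∧ BetaNF N

/-- `M` is strongly β-normalizable: no infinite β-reduction sequence starts from `M`. -/
def StronglyNormalizable (M : Lam) : Prop := Acc (fun N M' => Beta M' N) M

end Lam

/-! Rigid resource terms (the nonzero ones), in de Bruijn notation:
`a ::= x | λx.a | ⟨c⟩d⃗` with `d⃗` a list of rigid terms.
The term `0` is represented by `none : Option Rig`. -/
inductive Rig : Type
  | var : ℕ → Rig
  | lam : Rig → Rig
  | app : Rig → List Rig → Rig

namespace Rig

mutual
/-- Number of free occurrences of the variable `k` in a rigid term. -/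
def countR (k : ℕ) : Rig → ℕ
  | var n => if n = k then 1 else 0
  | lam a => countR (k + 1) a
  | app c ds => countR k c + countRList k ds
termination_by a => sizeOf a

def countRList (k : ℕ) : List Rig → ℕ
  | [] => 0
  | d :: ds => countR k d + countRList k ds
termination_by ds => sizeOf ds
end

mutual
/-- Shift the free indices `≥ d` up by one. -/
def liftR (d : ℕ) : Rig → Rig
  | var n => if n < d then var n else var (n + 1)
  | lam a => lam (liftR (d + 1) a)
  | app c ds => app (liftR d c) (liftRList d ds)
termination_by a => sizeOf a

def liftRList (d : ℕ) : List Rig → List Rig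
  | [] => []
  | a :: as => liftR d a :: liftRList d as
termination_by as => sizeOf as
end

mutual
/-- Rigid substitution `a[b⃗/k]`: the list `b⃗` is distributed, in order, over the
free occurrences of the variable `k`; the result is `none` (i.e. `0`) when
`|b⃗| ≠ n_k(a)`. -/
def rsubst (k : ℕ) : Rig → List Rig → Option Rig
  | var n, bs =>
      if n = k then (match bs with | [b] => some b | _ => none)
      else (match bs with
            | [] => some (if k < n then var (n - 1) else var n)
            | _ => none)
  | lam a, bs => (rsubst (k + 1) a (liftRList 0 bs)).map lam
  | app c ds, bs =>
      match rsubst k c (bs.take (countR k c)), rsubstList k ds (bs.drop (countR k c)) with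
      | some c', some ds' => some (app c' ds')
      | _, _ => none
termination_by a _ => sizeOf a

def rsubstList (k : ℕ) : List Rig → List Rig → Option (List Rig)
  | [], bs => if bs.isEmpty then some [] else none
  | d :: ds, bs =>
      match rsubst k d (bs.take (countR k d)), rsubstList k ds (bs.drop (countR k d)) with
      | some d', some ds' => some (d' :: ds')
      | _, _ => none
termination_by ds _ => sizeOf ds
end

/-- One-step rigid resource reduction `→_r` (contextual closure of
`⟨λx.a⟩b⃗ →_r a[b⃗/x]`); the result may be `0` (i.e. `none`), which annihilates
the surrounding context. -/
inductive RStep : Rig → Option Rig → Prop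
  | beta (a : Rig) (bs : List Rig) : RStep (app (lam a) bs) (rsubst 0 a bs)
  | lam {a r} : RStep a r → RStep (lam a) (r.map lam)
  | head {c r} (ds : List Rig) : RStep c r → RStep (app c ds) (r.map (fun c' => app c' ds))
  | arg {d r} (c : Rig) (ds₁ ds₂ : List Rig) :
      RStep d r → RStep (app c (ds₁ ++ d :: ds₂)) (r.map (fun d' => app c (ds₁ ++ d' :: ds₂)))

/-- `→_r` on rigid terms extended with `0`; `0` is inert. -/
inductive RStepO : Option Rig → Option Rig → Prop
  | mk {a r} : RStep a r → RStepO (some a) r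

/-- `r` is a `→_r`-normal form (`0` is one). -/
def RNormal (r : Option Rig) : Prop := ¬∃ r', RStepO r r'

/-- The head of the application spine is a variable, with no λ on the spine. -/
def rNeutral : Rig → Bool
  | var _ => true
  | lam _ => false
  | app c _ => rNeutral c

/-- Rigid head-normal forms among nonzero terms: `λx₁…λxₘ.⟨…⟨x⟩d⃗₁…⟩d⃗ₙ`
(the term `0` is a head-normal form, but it is treated separately). -/
def rIsHNF : Rig → Prop
  | var _ => True
  | lam a => rIsHNF a
  | app c _ => rNeutral c = true

/-- The rigid head-reduction function `H_r`: contracts the head redex, identity on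
head-normal forms; the result may be `0` (i.e. `none`). -/
def Hr : Rig → Option Rig
  | var n => some (var n)
  | lam a => (Hr a).map lam
  | app (lam a) bs => rsubst 0 a bs
  | app (var n) ds => some (app (var n) ds)
  | app (app c₁ c₂) ds => (Hr (app c₁ c₂)).map (fun c' => app c' ds)

/-- `H_r` extended to terms-or-`0`. -/
def HrO : Option Rig → Option Rig := fun r => r.bind Hr

mutual
/-- The rigid left-parallel reduction function `L_r`: identity on `→_r`-normal forms,
applied componentwise to the argument lists on head-normal forms, contraction of the
head redex otherwise; the result may be `0` (i.e. `none`). -/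
def Lr : Rig → Option Rig
  | var n => some (var n)
  | lam a => (Lr a).map lam
  | app (lam a) bs => rsubst 0 a bs
  | app (var n) ds => (LrList ds).map (fun ds' => app (var n) ds')
  | app (app c₁ c₂) ds =>
      if rNeutral (app c₁ c₂) then
        match Lr (app c₁ c₂), LrList ds with
        | some c', some ds' => some (app c' ds')
        | _, _ => none
      else (Lr (app c₁ c₂)).map (fun c' => app c' ds)
termination_by a => sizeOf a

def LrList : List Rig → Option (List Rig)
  | [] => some []
  | d :: ds =>
      match Lr d, LrList ds with
      | some d', some ds' => some (d' :: ds')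
      | _, _ => none
termination_by ds => sizeOf ds
end

/-- `L_r` extended to terms-or-`0`. -/
def LrO : Option Rig → Option Rig := fun r => r.bind Lr

/-- Positive resource terms: no empty list/multiset occurs as the argument of an
application. -/
inductive rPositive : Rig → Prop
  | var (n : ℕ) : rPositive (var n)
  | lam {a} : rPositive a → rPositive (lam a)
  | app {c : Rig} {ds : List Rig} :
      rPositive c → ds ≠ [] → (∀ d ∈ ds, rPositive d) → rPositive (app c ds)

end Rig

/-- The rigid expansion `T_r(M)` of a λ-term (equivalently, the support of its Taylor
expansion, with multisets presented by lists: `Texp M` is closed under permutation of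
argument lists). -/
def Texp : Lam → Set Rig
  | Lam.var n => {Rig.var n}
  | Lam.lam M => {a | ∃ b ∈ Texp M, a = Rig.lam b}
  | Lam.app P Q => {a | ∃ c ∈ Texp P, ∃ ds : List Rig, (∀ d ∈ ds, d ∈ Texp Q) ∧ a = Rig.app c ds}

namespace Rig

/-- The support of the `n`-linear substitution `∂_k a · b̄`, where the multiset `b̄` is
presented by the list `bs`: the finite formal sum (multiset) of all nonzero results of
rigid substitutions along bijective assignments, i.e. permutations of `bs`. -/
def permSubst (k : ℕ) (a : Rig) (bs : List Rig) : Multiset Rig :=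
  ↑(bs.permutations.filterMap (fun bs' => rsubst k a bs'))

/-- One step of non-erasing ε-resource reduction `→^{¬e}_{∂ε}` out of a single resource
term, producing a finite formal sum (a multiset) of resource terms: non-erasing resource
β-steps `⟨λx.a⟩b̄ → ∂_x a · b̄` (with `x ∈ FV(a)`) and resource σ₁-steps, under any
context. -/
inductive NEStep : Rig → Multiset Rig → Prop
  | beta {a : Rig} (bs : List Rig) :
      0 < countR 0 a → NEStep (app (lam a) bs) (permSubst 0 a bs)
  | sigma (a : Rig) (ts qs : List Rig) :
      NEStep (app (app (lam a) ts) qs) {app (lam (app a (liftRList 0 qs))) ts}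
  | lam {a σ} : NEStep a σ → NEStep (lam a) (σ.map lam)
  | head {c σ} (ds : List Rig) : NEStep c σ → NEStep (app c ds) (σ.map (fun c' => app c' ds))
  | arg {d σ} (c : Rig) (ds₁ ds₂ : List Rig) :
      NEStep d σ → NEStep (app c (ds₁ ++ d :: ds₂)) (σ.map (fun d' => app c (ds₁ ++ d' :: ds₂)))

/-- Non-erasing ε-resource reduction on finite formal sums, extended by linearity. -/
def NEStepSum (σ τ : Multiset Rig) : Prop :=
  ∃ (a : Rig) (ρ υ : Multiset Rig), σ = a ::ₘ ρ ∧ NEStep a υ ∧ τ = υ + ρ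

/-- `σ` is a `→^{¬e}_{∂ε}`-normal form. -/
def NENormal (σ : Multiset Rig) : Prop := ¬∃ τ, NEStepSum σ τ

end Rig

/-- One step of non-erasing ε-reduction on λ-terms: non-erasing β-steps
`(λx.M)N → M[N/x]` (with `x ∈ FV(M)`) together with σ₁-steps
`((λx.M)N)P → (λx.MP)N` (`x ∉ FV(P)`), under any context. -/
inductive NEeps : Lam → Lam → Prop
  | beta {M : Lam} (N : Lam) :
      0 < Lam.count 0 M → NEeps (Lam.app (Lam.lam M) N) (Lam.subst M 0 N)
  | sigma (M N P : Lam) :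
      NEeps (Lam.app (Lam.app (Lam.lam M) N) P)
        (Lam.app (Lam.lam (Lam.app M (Lam.lift 0 P))) N)
  | lam {M M'} : NEeps M M' → NEeps (Lam.lam M) (Lam.lam M')
  | appL {P P' Q} : NEeps P P' → NEeps (Lam.app P Q) (Lam.app P' Q)
  | appR {P Q Q'} : NEeps Q Q' → NEeps (Lam.app P Q) (Lam.app P Q')

/-- The set `S` of λ-terms. -/
inductive SLam : Lam → Prop
  | varApp (n : ℕ) (Ms : List Lam) :
      (∀ M ∈ Ms, SLam M) → SLam (Lam.mkApps (Lam.var n) Ms)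
  | lam {M} : SLam M → SLam (Lam.lam M)
  | redex (M₀ M₁ : Lam) (Ms : List Lam) :
      SLam M₁ → SLam (Lam.mkApps (Lam.subst M₀ 0 M₁) Ms) →
      SLam (Lam.mkApps (Lam.app (Lam.lam M₀) M₁) Ms)

/-- λI-terms: every abstraction binds a variable occurring free in its body. -/
def LamI : Lam → Prop
  | Lam.var _ => True
  | Lam.lam M => LamI M ∧ 0 < Lam.count 0 M
  | Lam.app P Q => LamI P ∧ LamI Q

/-!
It suffices that strong normalization is preserved backwards along a single step `M → N` out of a
λI-term `M`. Mark in `M` the redex contracted by this step, and follow the residuals of the mark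
along an arbitrary reduction `M = erase A₀ → erase A₁ → ⋯`. Contracting a marked redex leaves the
complete development `dev Aᵢ` unchanged but lowers the weight of `Aᵢ`, so only finitely many such
steps occur in a row. Contracting an unmarked redex induces at least one step out of `dev Aᵢ`: that
redex may be copied by the development, but in a λI-term it is never erased. An infinite reduction
of `M` would thus yield an infinite reduction of `dev A₀ = N`.
-/

open Relation

namespace Lam

theorem lift_lift (M : Lam) {i j : ℕ} (h : i ≤ j) :
    lift i (lift j M) = lift (j + 1) (lift i M) := by
  induction M generalizing i j with grind [lift]

theorem lift_subst_of_le (M N : Lam) {d k : ℕ} (h : k ≤ d) :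
    lift d (subst M k N) = subst (lift (d + 1) M) k (lift d N) := by
  induction M generalizing d k N with
  | var n => grind [lift, subst]
  | lam M ih => simp only [lift, subst, ih _ (Nat.succ_le_succ h), lift_lift N d.zero_le]
  | app P Q ihP ihQ => simp only [lift, subst, ihP _ h, ihQ _ h]

theorem lift_subst_of_ge (M N : Lam) {d k : ℕ} (h : d ≤ k) :
    lift d (subst M k N) = subst (lift d M) (k + 1) (lift d N) := by
  induction M generalizing d k N with
  | var n => grind [lift, subst]
  | lam M ih => simp only [lift, subst, ih _ (Nat.succ_le_succ h), lift_lift N d.zero_le]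
  | app P Q ihP ihQ => simp only [lift, subst, ihP _ h, ihQ _ h]

theorem subst_lift (M : Lam) (k : ℕ) (N : Lam) : subst (lift k M) k N = M := by
  induction M generalizing k N with grind [lift, subst]

theorem subst_subst (M N P : Lam) {j k : ℕ} (h : j ≤ k) :
    subst (subst M j N) k P = subst (subst M (k + 1) (lift j P)) j (subst N k P) := by
  induction M generalizing j k N P with
  | var n => grind [subst, subst_lift]
  | lam M ih =>
    simp only [subst, ih _ _ (Nat.succ_le_succ h), lift_lift P j.zero_le,
      lift_subst_of_ge N P k.zero_le]
  | app A B ihA ihB => simp only [subst, ihA _ _ h, ihB _ _ h]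

theorem count_lift_of_lt (M : Lam) {d k : ℕ} (h : k < d) : count k (lift d M) = count k M := by
  induction M generalizing d k with grind [lift, count]

theorem count_lift_of_le (M : Lam) {d k : ℕ} (h : d ≤ k) :
    count (k + 1) (lift d M) = count k M := by
  induction M generalizing d k with grind [lift, count]

theorem count_subst_of_lt (M N : Lam) {j k : ℕ} (h : k < j) :
    count k (subst M j N) = count k M + count j M * count k N := by
  induction M generalizing j k N with
  | var n => grind [subst, count]
  | lam M ih =>
    simp only [subst, count, ih _ (Nat.succ_lt_succ h), count_lift_of_le N k.zero_le]
  | app P Q ihP ihQ => simp only [subst, count, ihP _ h, ihQ _ h]; ring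

theorem count_subst_of_le (M N : Lam) {j k : ℕ} (h : j ≤ k) :
    count k (subst M j N) = count (k + 1) M + count j M * count k N := by
  induction M generalizing j k N with
  | var n => grind [subst, count]
  | lam M ih =>
    simp only [subst, count, ih _ (Nat.succ_le_succ h), count_lift_of_le N k.zero_le]
  | app P Q ihP ihQ => simp only [subst, count, ihP _ h, ihQ _ h]; ring

theorem count_subst_zero_pos {M N : Lam} {k : ℕ} (hM : 0 < count 0 M)
    (h : 0 < count (k + 1) M ∨ 0 < count k N) : 0 < count k (subst M 0 N) := by
  rw [count_subst_of_le M N k.zero_le]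
  exact h.elim (Nat.add_pos_left · _) fun hN => Nat.add_pos_right _ (Nat.mul_pos hM hN)

theorem Beta.lift {M M' : Lam} (h : Beta M M') (d : ℕ) : Beta (lift d M) (lift d M') := by
  induction h generalizing d with
  | beta M N => rw [lift_subst_of_le M N d.zero_le]; exact .beta _ _
  | lam _ ih => exact .lam (ih _)
  | appL _ ih => exact .appL (ih d)
  | appR _ ih => exact .appR (ih d)

theorem Beta.subst_left {M M' : Lam} (h : Beta M M') (k : ℕ) (N : Lam) :
    Beta (subst M k N) (subst M' k N) := by
  induction h generalizing k N with
  | beta M P => rw [subst_subst M P N k.zero_le]; exact .beta _ _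
  | lam _ ih => exact .lam (ih _ _)
  | appL _ ih => exact .appL (ih k N)
  | appR _ ih => exact .appR (ih k N)

theorem Beta.reflTransGen_subst_right {N N' : Lam} (h : Beta N N') (M : Lam) (k : ℕ) :
    ReflTransGen Beta (subst M k N) (subst M k N') := by
  induction M generalizing k N N' with
  | var n =>
    simp only [subst]
    split_ifs
    exacts [.single h, .refl, .refl]
  | lam M ih => exact (ih (h.lift 0) (k + 1)).lift Lam.lam fun _ _ => .lam
  | app P Q ihP ihQ =>
    exact ((ihP h k).lift (app · _) fun _ _ => .appL).trans
      ((ihQ h k).lift (app _) fun _ _ => .appR)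

theorem Beta.transGen_subst_right {N N' : Lam} (h : Beta N N') {M : Lam} {k : ℕ}
    (hM : 0 < count k M) : TransGen Beta (subst M k N) (subst M k N') := by
  induction M generalizing k N N' with
  | var n =>
    obtain rfl : n = k := by grind [count]
    simpa [subst] using TransGen.single h
  | lam M ih => exact (ih (h.lift 0) hM).lift Lam.lam fun _ _ => .lam
  | app P Q ihP ihQ =>
    rcases Nat.add_pos_iff_pos_or_pos.mp hM with hP | hQ
    · exact ((ihP h hP).lift (app · _) fun _ _ => .appL).trans_left
        ((h.reflTransGen_subst_right Q k).lift (app _) fun _ _ => .appR)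
    · exact .trans_right ((h.reflTransGen_subst_right P k).lift (app · _) fun _ _ => .appL)
        ((ihQ h hQ).lift (app _) fun _ _ => .appR)

theorem BetaNF.stronglyNormalizable {M : Lam} (h : BetaNF M) : StronglyNormalizable M :=
  .intro M fun N hMN => absurd ⟨N, hMN⟩ h

theorem StronglyNormalizable.betaNormalizable {M : Lam} (h : StronglyNormalizable M) :
    BetaNormalizable M := by
  induction h with
  | intro M _ ih =>
    by_cases hM : BetaNF M
    · exact ⟨M, .refl, hM⟩
    · obtain ⟨M', hMM'⟩ := not_not.mp hM
      obtain ⟨N, hM'N, hN⟩ := ih M' hMM'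
      exact ⟨N, .head hMM' hM'N, hN⟩

end Lam

namespace LamI

open Lam

theorem lift {M : Lam} (h : LamI M) (d : ℕ) : LamI (lift d M) := by
  induction M generalizing d with
  | var n => simp only [Lam.lift]; split_ifs <;> trivial
  | lam M ih => exact ⟨ih h.1 _, (count_lift_of_lt M d.succ_pos).symm ▸ h.2⟩
  | app P Q ihP ihQ => exact ⟨ihP h.1 d, ihQ h.2 d⟩

theorem subst {M N : Lam} (hM : LamI M) (hN : LamI N) (k : ℕ) : LamI (subst M k N) := by
  induction M generalizing k N with
  | var n => simp only [Lam.subst]; split_ifs <;> first | exact hN | trivial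
  | lam M ih =>
    refine ⟨ih hM.1 (hN.lift 0) _, ?_⟩
    rw [count_subst_of_lt M _ k.succ_pos]
    exact Nat.add_pos_left hM.2 _
  | app P Q ihP ihQ => exact ⟨ihP hM.1 hN k, ihQ hM.2 hN k⟩

theorem count_pos_of_beta {M M' : Lam} (hM : LamI M) (h : Beta M M') {k : ℕ}
    (hk : 0 < count k M) : 0 < count k M' := by
  induction h generalizing k with
  | beta M N => exact count_subst_zero_pos hM.1.2 (Nat.add_pos_iff_pos_or_pos.mp hk)
  | lam _ ih => exact ih hM.1 hk
  | appL _ ih => grind [count, LamI]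
  | appR _ ih => grind [count, LamI]

theorem of_beta {M M' : Lam} (hM : LamI M) (h : Beta M M') : LamI M' := by
  induction h with
  | beta M N => exact hM.1.1.subst hM.2 0
  | lam h ih => exact ⟨ih hM.1, hM.1.count_pos_of_beta h hM.2⟩
  | appL _ ih => exact ⟨ih hM.1, hM.2⟩
  | appR _ ih => exact ⟨hM.1, ih hM.2⟩

end LamI

/-- λ-terms some of whose β-redexes are marked: `redex P Q` is a marked `(λ P) Q`. -/
inductive MarkedLam : Type
  | var : ℕ → MarkedLam
  | lam : MarkedLam → MarkedLam
  | app : MarkedLam → MarkedLam → MarkedLam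
  | redex : MarkedLam → MarkedLam → MarkedLam

namespace MarkedLam

/-- Shift the free indices `≥ d` up by one; `redex` binds an index in its first argument. -/
def lift (d : ℕ) : MarkedLam → MarkedLam
  | var n => if n < d then var n else var (n + 1)
  | lam A => lam (lift (d + 1) A)
  | app A B => app (lift d A) (lift d B)
  | redex A B => redex (lift (d + 1) A) (lift d B)

/-- Capture-avoiding substitution for the free variable `k`; marks are copied along. -/
def subst : MarkedLam → ℕ → MarkedLam → MarkedLam
  | var n, k, C => if n = k then C else if k < n then var (n - 1) else var n
  | lam A, k, C => lam (subst A (k + 1) (lift 0 C))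
  | app A B, k, C => app (subst A k C) (subst B k C)
  | redex A B, k, C => redex (subst A (k + 1) (lift 0 C)) (subst B k C)

/-- The underlying λ-term, with all marks forgotten. -/
def erase : MarkedLam → Lam
  | var n => .var n
  | lam A => .lam (erase A)
  | app A B => .app (erase A) (erase B)
  | redex A B => .app (.lam (erase A)) (erase B)

/-- The complete development: all marked redexes are contracted, from the inside out. -/
def dev : MarkedLam → Lam
  | var n => .var n
  | lam A => .lam (dev A)
  | app A B => .app (dev A) (dev B)
  | redex A B => .subst (dev A) 0 (dev B)

/-- A λ-term regarded as a marked term without marks. -/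
def ofLam : Lam → MarkedLam
  | .var n => var n
  | .lam M => lam (ofLam M)
  | .app M N => app (ofLam M) (ofLam N)

theorem erase_ofLam (M : Lam) : erase (ofLam M) = M := by
  induction M with grind [ofLam, erase]

theorem dev_ofLam (M : Lam) : dev (ofLam M) = M := by
  induction M with grind [ofLam, dev]

theorem erase_lift (A : MarkedLam) (d : ℕ) : erase (lift d A) = Lam.lift d (erase A) := by
  induction A generalizing d with grind [lift, erase, Lam.lift]

theorem erase_subst (A : MarkedLam) (k : ℕ) (B : MarkedLam) :
    erase (subst A k B) = Lam.subst (erase A) k (erase B) := by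
  induction A generalizing k B with grind [subst, erase, Lam.subst, erase_lift]

theorem dev_lift (A : MarkedLam) (d : ℕ) : dev (lift d A) = Lam.lift d (dev A) := by
  induction A generalizing d with grind [lift, dev, Lam.lift, Lam.lift_subst_of_le]

theorem dev_subst (A : MarkedLam) (k : ℕ) (B : MarkedLam) :
    dev (subst A k B) = Lam.subst (dev A) k (dev B) := by
  induction A generalizing k B with
  | redex P Q ihP ihQ =>
    simp only [subst, dev, ihP, ihQ, dev_lift, Lam.subst_subst _ _ _ k.zero_le]
  | _ => grind [subst, dev, Lam.subst, dev_lift]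

theorem count_dev_pos {A : MarkedLam} (hA : LamI (erase A)) {k : ℕ}
    (hk : 0 < Lam.count k (erase A)) : 0 < Lam.count k (dev A) := by
  induction A generalizing k with
  | var n => exact hk
  | lam A ih => exact ih hA.1 hk
  | app P Q ihP ihQ =>
    exact Nat.add_pos_iff_pos_or_pos.mpr
      ((Nat.add_pos_iff_pos_or_pos.mp hk).imp (ihP hA.1) (ihQ hA.2))
  | redex P Q ihP ihQ =>
    exact Lam.count_subst_zero_pos (ihP hA.1.1 hA.1.2)
      ((Nat.add_pos_iff_pos_or_pos.mp hk).imp (ihP hA.1.1) (ihQ hA.2))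

theorem exists_erase_eq_dev_eq_of_beta {M M' : Lam} (h : Lam.Beta M M') :
    ∃ A, erase A = M ∧ dev A = M' := by
  induction h with
  | beta M N =>
    exact ⟨redex (ofLam M) (ofLam N),
      by simp only [erase, erase_ofLam], by simp only [dev, dev_ofLam]⟩
  | lam _ ih =>
    obtain ⟨A, rfl, rfl⟩ := ih
    exact ⟨lam A, rfl, rfl⟩
  | @appL _ _ Q _ ih =>
    obtain ⟨A, rfl, rfl⟩ := ih
    exact ⟨app A (ofLam Q), by simp only [erase, erase_ofLam], by simp only [dev, dev_ofLam]⟩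
  | @appR P _ _ _ ih =>
    obtain ⟨A, rfl, rfl⟩ := ih
    exact ⟨app (ofLam P) A, by simp only [erase, erase_ofLam], by simp only [dev, dev_ofLam]⟩

/-- Compatible closure: `r` applied to one subterm, in an arbitrary context. -/
inductive CompatibleClosure (r : MarkedLam → MarkedLam → Prop) : MarkedLam → MarkedLam → Prop
  | base {A₁ A₂} : r A₁ A₂ → CompatibleClosure r A₁ A₂
  | lam {A₁ A₂} : CompatibleClosure r A₁ A₂ → CompatibleClosure r (lam A₁) (lam A₂)
  | appL {A₁ A₂ B} : CompatibleClosure r A₁ A₂ → CompatibleClosure r (app A₁ B) (app A₂ B)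
  | appR {A B₁ B₂} : CompatibleClosure r B₁ B₂ → CompatibleClosure r (app A B₁) (app A B₂)
  | redexL {A₁ A₂ B} : CompatibleClosure r A₁ A₂ → CompatibleClosure r (redex A₁ B) (redex A₂ B)
  | redexR {A B₁ B₂} : CompatibleClosure r B₁ B₂ → CompatibleClosure r (redex A B₁) (redex A B₂)

/-- Contraction of a marked redex at the root. -/
inductive MarkedContraction : MarkedLam → MarkedLam → Prop
  | intro (A B) : MarkedContraction (redex A B) (subst A 0 B)

/-- Contraction of an unmarked redex at the root; marks inside are inherited by the residuals. -/
inductive UnmarkedContraction : MarkedLam → MarkedLam → Prop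
  | intro (A B) : UnmarkedContraction (app (lam A) B) (subst A 0 B)

/-- β-steps contracting a marked redex. -/
abbrev MarkedStep : MarkedLam → MarkedLam → Prop := CompatibleClosure MarkedContraction

/-- β-steps contracting an unmarked redex. -/
abbrev UnmarkedStep : MarkedLam → MarkedLam → Prop := CompatibleClosure UnmarkedContraction

theorem exists_step_of_beta_erase {A : MarkedLam} {N : Lam} (h : Lam.Beta (erase A) N) :
    ∃ B, erase B = N ∧ (MarkedStep A B ∨ UnmarkedStep A B) := by
  induction A generalizing N with
  | var n => cases h
  | lam A ih =>
    cases h with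
    | lam h =>
      obtain ⟨B, rfl, hB⟩ := ih h
      exact ⟨lam B, rfl, hB.imp .lam .lam⟩
  | app P Q ihP ihQ =>
    rw [erase] at h
    generalize hM : erase P = M at h
    cases h with
    | beta M =>
      cases P with
      | lam P =>
        obtain rfl : erase P = M := by simpa [erase] using hM
        exact ⟨subst P 0 Q, erase_subst P 0 Q, .inr (.base (.intro P Q))⟩
      | _ => simp [erase] at hM
    | appL h =>
      obtain ⟨B, rfl, hB⟩ := ihP (hM ▸ h)
      exact ⟨app B Q, rfl, hB.imp .appL .appL⟩
    | appR h =>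
      obtain ⟨B, rfl, hB⟩ := ihQ h
      exact ⟨app P B, hM ▸ rfl, hB.imp .appR .appR⟩
  | redex P Q ihP ihQ =>
    cases h with
    | beta => exact ⟨subst P 0 Q, erase_subst P 0 Q, .inl (.base (.intro P Q))⟩
    | appL h =>
      cases h with
      | lam h =>
        obtain ⟨B, rfl, hB⟩ := ihP h
        exact ⟨redex B Q, rfl, hB.imp .redexL .redexL⟩
    | appR h =>
      obtain ⟨B, rfl, hB⟩ := ihQ h
      exact ⟨redex P B, rfl, hB.imp .redexR .redexR⟩

theorem MarkedStep.dev_eq {A B : MarkedLam} (h : MarkedStep A B) : dev B = dev A := by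
  induction h with
  | base h => obtain ⟨P, Q⟩ := h; exact dev_subst P 0 Q
  | _ => simp only [dev, *]

theorem UnmarkedStep.transGen_beta_dev {A B : MarkedLam} (h : UnmarkedStep A B)
    (hA : LamI (erase A)) : TransGen Lam.Beta (dev A) (dev B) := by
  induction h with
  | base h => obtain ⟨P, Q⟩ := h; exact dev_subst P 0 Q ▸ .single (.beta _ _)
  | lam _ ih => exact (ih hA.1).lift Lam.lam fun _ _ => .lam
  | appL _ ih => exact (ih hA.1).lift (Lam.app · _) fun _ _ => .appL
  | appR _ ih => exact (ih hA.2).lift (Lam.app _) fun _ _ => .appR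
  | redexL _ ih => exact (ih hA.1.1).lift (Lam.subst · 0 _) fun _ _ h => h.subst_left 0 _
  | redexR _ ih =>
    have hP := count_dev_pos hA.1.1 hA.1.2
    exact (ih hA.2).lift' (Lam.subst _ 0) fun _ _ h => h.transGen_subst_right hP

/-- Insert the value `v` at index `k` of `ρ`, shifting the later values up. -/
def insertAt {α : Type*} (k : ℕ) (v : α) (ρ : ℕ → α) : ℕ → α :=
  fun n => if n = k then v else if k < n then ρ (n - 1) else ρ n

theorem insertAt_succ_insertAt {α : Type*} {i k : ℕ} (h : i ≤ k) (v w : α) (ρ : ℕ → α) :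
    insertAt (k + 1) v (insertAt i w ρ) = insertAt i w (insertAt k v ρ) := by
  grind [insertAt]

theorem insertAt_mono {α : Type*} [Preorder α] (k : ℕ) {v w : α} {ρ σ : ℕ → α} (hv : v ≤ w)
    (hρ : ρ ≤ σ) : insertAt k v ρ ≤ insertAt k w σ := by
  intro n
  simp only [insertAt]
  split_ifs
  exacts [hv, hρ _, hρ _]

/-- A bound on the number of successive marked steps, where `ρ n` is the weight of a term to be
substituted for the free variable `n`. -/
def weight : MarkedLam → (ℕ → ℕ) → ℕ
  | var n, ρ => ρ n
  | lam A, ρ => weight A (insertAt 0 0 ρ)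
  | app A B, ρ => weight A ρ + weight B ρ
  | redex A B, ρ => weight A (insertAt 0 (weight B ρ) ρ) + weight B ρ + 1

theorem weight_mono (A : MarkedLam) : Monotone (weight A) := by
  intro ρ σ h
  induction A generalizing ρ σ with
  | var n => exact h n
  | lam _ ih => exact ih (insertAt_mono 0 le_rfl h)
  | app P Q ihP ihQ => exact Nat.add_le_add (ihP h) (ihQ h)
  | redex P Q ihP ihQ =>
    exact Nat.succ_le_succ (Nat.add_le_add (ihP (insertAt_mono 0 (ihQ h) h)) (ihQ h))

theorem weight_lift_insertAt (A : MarkedLam) (d v : ℕ) (ρ : ℕ → ℕ) :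
    weight (lift d A) (insertAt d v ρ) = weight A ρ := by
  induction A generalizing d ρ with
  | var n => grind [lift, weight, insertAt]
  | _ => simp only [lift, weight, ← insertAt_succ_insertAt (Nat.zero_le _), *]

theorem weight_subst (A : MarkedLam) (k : ℕ) (B : MarkedLam) (ρ : ℕ → ℕ) :
    weight (subst A k B) ρ = weight A (insertAt k (weight B ρ) ρ) := by
  induction A generalizing k B ρ with
  | var n => grind [subst, weight, insertAt]
  | _ => simp only [subst, weight, weight_lift_insertAt, insertAt_succ_insertAt k.zero_le, *]

theorem MarkedStep.weight_lt {A B : MarkedLam} (h : MarkedStep A B) (ρ : ℕ → ℕ) :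
    weight B ρ < weight A ρ := by
  induction h generalizing ρ with
  | base h =>
    obtain ⟨P, Q⟩ := h
    rw [weight_subst, weight]
    omega
  | lam _ ih => exact ih _
  | appL _ ih => exact Nat.add_lt_add_right (ih ρ) _
  | appR _ ih => exact Nat.add_lt_add_left (ih ρ) _
  | redexL _ ih => exact Nat.succ_lt_succ (Nat.add_lt_add_right (ih _) _)
  | @redexR P _ _ _ ih =>
    have hP := weight_mono P (insertAt_mono 0 (ih ρ).le (le_refl ρ))
    exact Nat.succ_lt_succ (Nat.add_lt_add_of_le_of_lt hP (ih ρ))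

theorem stronglyNormalizable_erase {A : MarkedLam} (hA : LamI (erase A))
    (h : Lam.StronglyNormalizable (dev A)) : Lam.StronglyNormalizable (erase A) := by
  replace h := Acc.transGen h
  generalize hX : dev A = X at h
  induction h generalizing A with
  | intro X _ ih_dev =>
    induction hn : weight A 0 using Nat.strong_induction_on generalizing A with
    | _ n ih_weight =>
      subst hX hn
      refine .intro _ fun N hN => ?_
      obtain ⟨B, rfl, hAB | hAB⟩ := exists_step_of_beta_erase hN
      · exact ih_weight _ (hAB.weight_lt 0) (hA.of_beta hN) hAB.dev_eq rfl
      · exact ih_dev _ (transGen_swap.mpr (hAB.transGen_beta_dev hA)) (hA.of_beta hN) rfl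

end MarkedLam

namespace LamI

open Lam

theorem stronglyNormalizable_of_beta {M M' : Lam} (hM : LamI M) (h : Beta M M')
    (hM' : StronglyNormalizable M') : StronglyNormalizable M := by
  obtain ⟨A, rfl, rfl⟩ := MarkedLam.exists_erase_eq_dev_eq_of_beta h
  exact MarkedLam.stronglyNormalizable_erase hM hM'

theorem stronglyNormalizable_of_reflTransGen_beta {M N : Lam} (hM : LamI M)
    (h : ReflTransGen Beta M N) (hN : StronglyNormalizable N) : StronglyNormalizable M := by
  induction h using ReflTransGen.head_induction_on with
  | refl => exact hN
  | head h _ ih => exact hM.stronglyNormalizable_of_beta h (ih (hM.of_beta h))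

end LamI

/-- conservation theorem for the λI-calculus: a λI-term is
β-normalizable iff it is strongly β-normalizable. -/
theorem lambdaI_conservation {M : Lam} (h : LamI M) :
    Lam.BetaNormalizable M ↔ Lam.StronglyNormalizable M := by
  constructor
  · rintro ⟨N, hMN, hN⟩
    exact h.stronglyNormalizable_of_reflTransGen_beta hMN hN.stronglyNormalizable
  · exact Lam.StronglyNormalizable.betaNormalizable
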